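/- arXiv:2503.04532 — 2 statements merged into one kernel-verified Lean document; each statement's English description precedes it below -/
import Mathlib

section
/- Let A be a commutative ℚ-algebra, and let m ≥ 2, ℓ ≥ 1 and g ≥ 0 be integers. Suppose x_1,…,x_{2g}, c ∈ A satisfy x_j² = 0 for each j; set P = x_1x_2⋯x_{2g} (with P = 1 when g = 0), and assume P·c^ℓ ≠ 0 while P·c^{ℓ+k} = 0 for every integer k ≥ 1. Then in the m-fold tensor power A^{⊗m} over ℚ, the product (∏_{j=1}^{2g} (x̄_j)^m)·(c̄)^{mℓ} equals (−1)^ℓ · (m−1)^{2g+ℓ} · (m!)^{2g} · ((mℓ)!/(ℓ!)^m) · (P·c^ℓ)^{⊗m}, and in particular this element is nonzero. -/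
open scoped unitInterval Topology
open MeasureTheory
noncomputable section

/-- The `m`-fold tensor power `A^{⊗m}` of a `ℚ`-algebra `A` over `ℚ`. -/
abbrev TPow (A : Type*) [CommRing A] [Algebra ℚ A] (m : ℕ) : Type _ :=
  PiTensorProduct ℚ (fun _ : Fin m => A)

/-- The `i`-th inclusion `ιᵢ : A → A^{⊗m}`, `a ↦ 1 ⊗ ⋯ ⊗ a ⊗ ⋯ ⊗ 1`
(with `a` in position `i`). -/
def iota {A : Type*} [CommRing A] [Algebra ℚ A] {m : ℕ} (i : Fin m) (a : A) : TPow A m :=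
  PiTensorProduct.tprod ℚ (Function.update (fun _ => (1 : A)) i a)

/-- `ā = Σ_{i=1}^{m-1} ιᵢ(a) - (m-1)·ιₘ(a) ∈ A^{⊗m}` (indices `0,…,m-1`: coefficient `1`
for `i < m-1` and `-(m-1)` for the last index). -/
def abar {A : Type*} [CommRing A] [Algebra ℚ A] {m : ℕ} (a : A) : TPow A m :=
  ∑ i : Fin m, (if (i : ℕ) = m - 1 then -((m : ℤ) - 1) else 1) • iota i a

/-- The pure tensor `a^{⊗m} = a ⊗ a ⊗ ⋯ ⊗ a ∈ A^{⊗m}`. -/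
def tpowEl {A : Type*} [CommRing A] [Algebra ℚ A] (m : ℕ) (a : A) : TPow A m :=
  PiTensorProduct.tprod ℚ (fun _ : Fin m => a)

/-!
Suppose `p * a ^ (n + 1) = 0`. Multiplication by `p^{⊗m}` kills every monomial in the `ιᵢ(a)` having
some exponent larger than `n`. The exponents of a monomial in the multinomial expansion of
`ā ^ (m * n)` add up to `m * n`, so the only one that survives is the one with all exponents equal
to `n`, which is `(a ^ n)^{⊗m}`; its coefficient is a multinomial coefficient times the `n`-th power
of the product `1 - m` of the coefficients of `ā`. Apply this to `(p, a, n) = (1, xⱼ, 1)` for every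
`j`, and then to `(P, c, ℓ)`. The result is nonzero because linear functionals over a field detect
that a pure tensor of nonzero vectors is nonzero.
-/

section General

variable {ι R : Type*}

lemma exists_lt_of_sum_eq_of_ne {M : Type*} [Fintype ι] [AddCommMonoid M] [LinearOrder M]
    [IsOrderedCancelAddMonoid M] {f g : ι → M} (hsum : ∑ i, f i = ∑ i, g i) (hne : f ≠ g) :
    ∃ i, f i < g i := by
  by_contra! hle
  exact (Fintype.sum_strictMono (lt_of_le_of_ne hle hne.symm)).ne' hsum

lemma mul_prod_pow_eq_zero_of_lt [CommSemiring R] {s : Finset ι} {p : R} {y : ι → R} {k : ι → ℕ}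
    {n : ℕ} {i : ι} (hi : i ∈ s) (h : p * y i ^ (n + 1) = 0) (hk : n < k i) :
    p * ∏ j ∈ s, y j ^ k j = 0 := by
  have hdvd : p * y i ^ (n + 1) ∣ p * ∏ j ∈ s, y j ^ k j :=
    mul_dvd_mul_left p <| (pow_dvd_pow _ hk).trans <|
      Finset.dvd_prod_of_mem (fun j ↦ y j ^ k j) hi
  rwa [h, zero_dvd_iff] at hdvd

lemma mul_sum_pow_card_mul [Fintype ι] [CommSemiring R] {p : R} {y : ι → R} {n : ℕ}
    (h : ∀ i, p * y i ^ (n + 1) = 0) :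
    p * (∑ i, y i) ^ (Fintype.card ι * n) =
      Nat.multinomial Finset.univ (fun _ : ι ↦ n) * (p * (∏ i, y i) ^ n) := by
  classical
  rw [Finset.sum_pow_eq_sum_piAntidiag, Finset.mul_sum, Finset.sum_eq_single fun _ ↦ n]
  · rw [Finset.prod_pow, mul_left_comm]
  · intro k hk hne
    have hsum : ∑ _i : ι, n = ∑ i, k i := by simp [(Finset.mem_piAntidiag.1 hk).1]
    obtain ⟨i, hi⟩ := exists_lt_of_sum_eq_of_ne hsum hne.symm
    rw [mul_left_comm, mul_prod_pow_eq_zero_of_lt (Finset.mem_univ i) (h i) hi, mul_zero]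
  · intro hmem
    exact absurd (by simp [Finset.mem_piAntidiag]) hmem

lemma multinomial_const [Fintype ι] (n : ℕ) :
    Nat.multinomial Finset.univ (fun _ : ι ↦ n) =
      (Fintype.card ι * n).factorial / n.factorial ^ Fintype.card ι := by
  simp [Nat.multinomial]

lemma tprod_ne_zero [Finite ι] [CommSemiring R] [NoZeroDivisors R] [Nontrivial R] {M : ι → Type*}
    [∀ i, AddCommMonoid (M i)] [∀ i, Module R (M i)] [∀ i, Module.Projective R (M i)]
    {v : ∀ i, M i} (hv : ∀ i, v i ≠ 0) : PiTensorProduct.tprod R v ≠ 0 := by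
  cases nonempty_fintype ι
  choose f hf using fun i ↦ Module.Projective.exists_dual_ne_zero R (hv i)
  have hprod : ∏ i, f i (v i) ≠ 0 := Finset.prod_ne_zero_iff.2 fun i _ ↦ hf i
  intro hzero
  apply hprod
  rw [← PiTensorProduct.dualDistrib_apply, hzero, map_zero]

end General

section TensorPower

variable {A : Type*} [CommRing A] [Algebra ℚ A] {m : ℕ}

lemma iota_pow (i : Fin m) (a : A) (n : ℕ) : iota i (a ^ n) = iota i a ^ n :=
  map_pow (PiTensorProduct.singleAlgHom (R := ℚ) (A := fun _ : Fin m ↦ A) i) a n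

/-- The multiplicative map `a ↦ a^{⊗m}`, bundled to give access to the `map_*` lemmas. -/
def tpowElHom (A : Type*) [CommRing A] [Algebra ℚ A] (m : ℕ) : A →* TPow A m :=
  (PiTensorProduct.tprodMonoidHom ℚ).comp (Pi.constMonoidHom (Fin m) A)

lemma tpowElHom_apply (a : A) : tpowElHom A m a = tpowEl m a :=
  rfl

lemma tpowEl_eq_zero_iff (hm : m ≠ 0) {a : A} : tpowEl m a = 0 ↔ a = 0 := by
  refine ⟨fun h ↦ ?_, fun h ↦ ?_⟩
  · by_contra ha
    exact tprod_ne_zero (fun _ ↦ ha) h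
  · exact (PiTensorProduct.tprod ℚ).map_coord_zero ⟨0, Nat.pos_of_ne_zero hm⟩ h

lemma prod_iota (a : A) : ∏ i : Fin m, iota i a = tpowEl m a := by
  simp only [iota, tpowEl, ← PiTensorProduct.tprod_prod]
  exact congrArg _ (Finset.univ_prod_mulSingle fun _ : Fin m ↦ a)

lemma tpowEl_mul_iota_eq_zero {p b : A} (h : p * b = 0) (i : Fin m) :
    tpowEl m p * iota i b = 0 := by
  rw [tpowEl, iota, PiTensorProduct.tprod_mul_tprod]
  exact (PiTensorProduct.tprod ℚ).map_coord_zero i (by simp [h])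

lemma prod_abar_coeff (m : ℕ) :
    ∏ i : Fin m, (if (i : ℕ) = m - 1 then -((m : ℤ) - 1) else 1) = 1 - m := by
  cases m with
  | zero => simp
  | succ n => simp [Fin.prod_univ_castSucc, (Fin.is_lt _).ne]

lemma tpowEl_mul_abar_pow {p a : A} {n : ℕ} (h : p * a ^ (n + 1) = 0) :
    tpowEl m p * abar a ^ (m * n) =
      ((1 - m) ^ n * Nat.multinomial Finset.univ (fun _ : Fin m ↦ n) : ℤ) •
        tpowEl m (p * a ^ n) := by
  have hvan (r : ℤ) (i : Fin m) : tpowEl m p * (r • iota i a) ^ (n + 1) = 0 := by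
    rw [smul_pow, ← iota_pow, mul_smul_comm, tpowEl_mul_iota_eq_zero h, smul_zero]
  have hsum := mul_sum_pow_card_mul fun i : Fin m ↦
    hvan (if (i : ℕ) = m - 1 then -((m : ℤ) - 1) else 1) i
  rw [Fintype.card_fin, Finset.prod_smul, prod_abar_coeff, prod_iota] at hsum
  rw [abar, hsum, smul_pow]
  simp only [← tpowElHom_apply, map_mul, map_pow, zsmul_eq_mul]
  push_cast
  ring

lemma abar_pow_of_sq_eq_zero {a : A} (ha : a ^ 2 = 0) :
    abar a ^ m = ((1 - m) * m.factorial : ℤ) • tpowEl m a := by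
  have h := tpowEl_mul_abar_pow (m := m) (p := 1) (a := a) (n := 1) (by rwa [one_mul])
  simpa [← tpowElHom_apply, multinomial_const] using h

lemma prod_abar_pow_of_sq_eq_zero {ι : Type*} [Fintype ι] {x : ι → A} (hx : ∀ j, x j ^ 2 = 0) :
    ∏ j, abar (x j) ^ m =
      ((1 - m) ^ Fintype.card ι * m.factorial ^ Fintype.card ι : ℤ) • tpowEl m (∏ j, x j) := by
  simp only [abar_pow_of_sq_eq_zero (hx _), Finset.prod_smul, Finset.prod_const,
    Finset.card_univ, mul_pow, ← tpowElHom_apply, map_prod]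

theorem prod_abar_pow_mul_cbar_pow_eq_general {ι : Type*} [Fintype ι] {ℓ : ℕ} (hm : 2 ≤ m)
    {x : ι → A} {c : A} (hx : ∀ j, x j ^ 2 = 0) (hvan : (∏ j, x j) * c ^ (ℓ + 1) = 0) :
    (∏ j, abar (m := m) (x j) ^ m) * abar (m := m) c ^ (m * ℓ) =
        ((1 - m) ^ (Fintype.card ι + ℓ) * m.factorial ^ Fintype.card ι *
          Nat.multinomial Finset.univ (fun _ : Fin m ↦ ℓ) : ℤ) • tpowEl m ((∏ j, x j) * c ^ ℓ)
      ∧ ((∏ j, abar (m := m) (x j) ^ m) * abar (m := m) c ^ (m * ℓ) = 0 ↔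
        (∏ j, x j) * c ^ ℓ = 0) := by
  have : IsAddTorsionFree (TPow A m) := .of_module_rat _
  have hm1 : (1 - m : ℤ) ≠ 0 := by omega
  have hmult := (Nat.multinomial_pos Finset.univ fun _ : Fin m ↦ ℓ).ne'
  rw [prod_abar_pow_of_sq_eq_zero hx, smul_mul_assoc, tpowEl_mul_abar_pow hvan, smul_smul]
  refine ⟨congrArg (· • _) (by ring), ?_⟩
  rw [smul_eq_zero_iff_right (by positivity), tpowEl_eq_zero_iff (by omega)]

end TensorPower

/-- With `xⱼ² = 0`, `P = x₁⋯x_{2g}`, `P·c^ℓ ≠ 0` and `P·c^{ℓ+k} = 0` for `k ≥ 1`, one has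
`(∏ⱼ (x̄ⱼ)ᵐ)·(c̄)^{mℓ} = (-1)^ℓ (m-1)^{2g+ℓ} (m!)^{2g} ((mℓ)!/(ℓ!)^m) · (P·c^ℓ)^{⊗m} ≠ 0`. -/
theorem prod_abar_pow_mul_cbar_pow_eq {A : Type*} [CommRing A] [Algebra ℚ A]
    (m ℓ g : ℕ) (hm : 2 ≤ m) (hl : 1 ≤ ℓ)
    (x : Fin (2 * g) → A) (c : A) (hx : ∀ j, x j ^ 2 = 0)
    (hne : (∏ j, x j) * c ^ ℓ ≠ 0)
    (hvan : ∀ k : ℕ, 1 ≤ k → (∏ j, x j) * c ^ (ℓ + k) = 0) :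
    (∏ j, (abar (m := m) (x j)) ^ m) * (abar (m := m) c) ^ (m * ℓ)
        = (-1 : TPow A m) ^ ℓ * (((m - 1) ^ (2 * g + ℓ) : ℕ) : TPow A m)
            * ((Nat.factorial m ^ (2 * g) : ℕ) : TPow A m)
            * ((Nat.factorial (m * ℓ) / Nat.factorial ℓ ^ m : ℕ) : TPow A m)
            * tpowEl m ((∏ j, x j) * c ^ ℓ)
      ∧ (∏ j, (abar (m := m) (x j)) ^ m) * (abar (m := m) c) ^ (m * ℓ) ≠ 0 := by
  obtain ⟨heq, hzero⟩ := prod_abar_pow_mul_cbar_pow_eq_general hm hx (hvan 1 le_rfl)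
  have hsign : (1 - m : ℤ) ^ (2 * g + ℓ) = (-1) ^ ℓ * ((m - 1 : ℕ) : ℤ) ^ (2 * g + ℓ) := by
    rw [← neg_sub, neg_pow, pow_add (-1), (even_two_mul g).neg_one_pow, one_mul,
      Nat.cast_pred (by omega)]
  refine ⟨heq.trans ?_, mt hzero.1 hne⟩
  simp only [Fintype.card_fin, hsign, multinomial_const, zsmul_eq_mul, Int.cast_mul, Int.cast_pow,
    Int.cast_neg, Int.cast_one, Int.cast_natCast, Nat.cast_pow]

end
end

section
/- Let R be a commutative ring, m ≥ 2 an integer, and x_1,…,x_m ∈ R elements with x_i² = 0 for each i. Then (x_1 + x_2 + ⋯ + x_{m−1} − (m−1)·x_m)^m = −(m−1)·m!·x_1x_2⋯x_m. -/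
open scoped unitInterval Topology
open MeasureTheory
noncomputable section

/-!
If every `x i` squares to zero, only squarefree monomials survive in the expansion of
`(∑ i, x i) ^ n`, so it is `n!` times the `n`-th elementary symmetric function; for `n` the number
of variables this is `n! * ∏ i, x i`. The multiple `c * x i₀` still squares to zero, so giving
`x i₀` the coefficient `c` just multiplies the result by `c`, and the theorem is `c = -(m - 1)`.
-/

section SquareZero

open Finset

variable {ι R : Type*} [CommSemiring R]

theorem add_pow_of_sq_eq_zero {a : R} (ha : a ^ 2 = 0) (b : R) (n : ℕ) :
    (b + a) ^ n = b ^ n + n * b ^ (n - 1) * a := by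
  obtain ⟨k, hk⟩ := Polynomial.powAddExpansion b a n
  simpa only [ha, mul_zero, add_zero] using hk

theorem sum_prod_powersetCard_insert [DecidableEq ι] {s : Finset ι} {a : ι} (ha : a ∉ s)
    (x : ι → R) (n : ℕ) :
    ∑ t ∈ powersetCard (n + 1) (insert a s), ∏ i ∈ t, x i =
      ∑ t ∈ powersetCard (n + 1) s, ∏ i ∈ t, x i +
        x a * ∑ t ∈ powersetCard n s, ∏ i ∈ t, x i := by
  have notMem {k : ℕ} {t : Finset ι} (ht : t ∈ powersetCard k s) : a ∉ t :=
    fun hat => ha ((mem_powersetCard.mp ht).1 hat)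
  have insert_injOn : Set.InjOn (insert a) (powersetCard n s : Set (Finset ι)) :=
    fun t ht u hu h => by
      rw [← erase_insert (notMem ht), h, erase_insert (notMem hu)]
  have disjoint : Disjoint (powersetCard (n + 1) s) ((powersetCard n s).image (insert a)) := by
    refine disjoint_left.mpr fun t ht ht' => ?_
    obtain ⟨u, -, rfl⟩ := mem_image.mp ht'
    exact notMem ht (mem_insert_self a u)
  rw [powersetCard_succ_insert ha, sum_union disjoint, sum_image insert_injOn, mul_sum]
  congr 1
  exact sum_congr rfl fun t ht => prod_insert (notMem ht)

theorem sum_pow_of_sq_eq_zero {s : Finset ι} {x : ι → R} (hx : ∀ i ∈ s, x i ^ 2 = 0) (n : ℕ) :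
    (∑ i ∈ s, x i) ^ n = n.factorial * ∑ t ∈ powersetCard n s, ∏ i ∈ t, x i := by
  classical
  induction s using Finset.induction_on generalizing n with
  | empty =>
    cases n with
    | zero => simp
    | succ n => simp [powersetCard_eq_empty.mpr (card_empty.trans_lt n.succ_pos)]
  | insert a s ha ih =>
    obtain ⟨hxa, hxs⟩ := (forall_mem_insert ..).mp hx
    cases n with
    | zero => simp
    | succ n =>
      rw [sum_insert ha, add_comm, add_pow_of_sq_eq_zero hxa, Nat.add_sub_cancel, ih hxs, ih hxs,
        sum_prod_powersetCard_insert ha, Nat.factorial_succ]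
      push_cast
      ring

theorem sum_pow_card_of_sq_eq_zero {s : Finset ι} {x : ι → R} (hx : ∀ i ∈ s, x i ^ 2 = 0) :
    (∑ i ∈ s, x i) ^ #s = (#s).factorial * ∏ i ∈ s, x i := by
  rw [sum_pow_of_sq_eq_zero hx, powersetCard_self, sum_singleton]

theorem pow_sum_sq_zero_eq_general [DecidableEq ι] {s : Finset ι} {x : ι → R}
    (hx : ∀ i ∈ s, x i ^ 2 = 0) {i₀ : ι} (hi₀ : i₀ ∈ s) (c : R) :
    (∑ i ∈ s.erase i₀, x i + c * x i₀) ^ #s = c * (#s).factorial * ∏ i ∈ s, x i := by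
  set y := Function.update x i₀ (c * x i₀) with hy
  have y_sq : ∀ i ∈ s, y i ^ 2 = 0 := by
    intro i hi
    rcases eq_or_ne i i₀ with rfl | hne
    · rw [hy, Function.update_self, mul_pow, hx i hi, mul_zero]
    · rw [hy, Function.update_of_ne hne, hx i hi]
  have sum_y : ∑ i ∈ s, y i = ∑ i ∈ s.erase i₀, x i + c * x i₀ := by
    rw [sum_update_of_mem hi₀, sdiff_singleton_eq_erase, add_comm]
  have prod_y : ∏ i ∈ s, y i = c * ∏ i ∈ s, x i := by
    rw [prod_update_of_mem hi₀, sdiff_singleton_eq_erase, mul_assoc, mul_prod_erase s x hi₀]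
  rw [← sum_y, sum_pow_card_of_sq_eq_zero y_sq, prod_y]
  ring

end SquareZero

/-- In a commutative ring, if `xᵢ² = 0` for all `i`, then
`(x₁ + ⋯ + x_{m-1} - (m-1)xₘ)ᵐ = -(m-1)·m!·x₁x₂⋯xₘ`. -/
theorem pow_sum_sq_zero_eq {R : Type*} [CommRing R] (m : ℕ) (hm : 2 ≤ m)
    (x : Fin m → R) (hx : ∀ i, x i ^ 2 = 0) :
    ((∑ i ∈ Finset.univ.filter (fun i : Fin m => (i : ℕ) < m - 1), x i)
        - (m - 1 : ℕ) • x (⟨m - 1, by omega⟩ : Fin m)) ^ m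
      = -(((m - 1) * Nat.factorial m : ℕ) : R) * ∏ i, x i := by
  have filter_eq_erase : Finset.univ.filter (fun i : Fin m => (i : ℕ) < m - 1) =
      Finset.univ.erase ⟨m - 1, by omega⟩ := by
    grind
  simpa [filter_eq_erase, sub_eq_add_neg] using pow_sum_sq_zero_eq_general (fun i _ => hx i)
    (Finset.mem_univ (⟨m - 1, by omega⟩ : Fin m)) (-((m - 1 : ℕ) : R))

end
end
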